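/- arXiv:1209.0723 — 12 statements merged into one kernel-verified Lean document; each statement's English description precedes it below -/
import Mathlib

section
/- Let x1, x2, x3, d1, d2, d3, L be rational numbers with x1 > 0, x2 > 0, x3 > 0, d1 > 0, d2 > 0, d3 > 0. If the eight cuboid factor equations hold, namely p0 = 0, p1 + p2 + p3 = 0, d1·p1 + d2·p2 + d3·p3 = 0, x1·p1 + x2·p2 + x3·p3 = 0, d1²·p1 + d2²·p2 + d3²·p3 = 0, x1²·p1 + x2²·p2 + x3²·p3 = 0, x1·d1·p1 + x2·d2·p2 + x3·d3·p3 = 0, and x1²·d1²·p1 + x2²·d2²·p2 + x3²·d3²·p3 = 0, then the original cuboid equations hold: x1² + x2² + x3² = L², x2² + x3² = d1², x3² + x1² = d2², and x1² + x2² = d3². -/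
/-!
Write `S = x1² + x2² + x3²`, so that `pᵢ = S - xᵢ² - dᵢ²` depends only on `S` and the point
`(xᵢ, dᵢ)`. The factor equations say that `∑ pᵢ f(xᵢ, dᵢ) = 0` for `f` in the span of
`1, x, d, x², d², xd`, hence for every product of two affine functions of `(x, d)`. Choosing
products that vanish at the second and third points isolates `p1`. If `p1 ≠ 0`, this forces
another point to coincide with `(x1, d1)` (`first_eq_zero`); the two corresponding values `pᵢ`
are then equal, and the linear equations force the remaining point to coincide with them as well,
so that `3 p1 = 0` (`first_eq_zero_of_eq`). By symmetry `p2 = 0`, and then `p3 = 0` because the sum is zero.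
-/

/-- If the first two of the three points `(x, d)`, `(x, d)`, `(x3, d3)` coincide, then the common
value `p` at them vanishes. -/
lemma first_eq_zero_of_eq {S x d x3 d3 p p3 : ℚ}
    (hp : p = S - x^2 - d^2) (hp3 : p3 = S - x3^2 - d3^2)
    (e : p + p + p3 = 0) (ed : d*p + d*p + d3*p3 = 0) (ex : x*p + x*p + x3*p3 = 0) :
    p = 0 := by
  by_contra hne
  have hx : x = x3 :=
    sub_eq_zero.1 ((mul_eq_zero.1
      (by linear_combination (ex - x3 * e) / 2 : p * (x - x3) = 0)).resolve_left hne)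
  have hd : d = d3 :=
    sub_eq_zero.1 ((mul_eq_zero.1
      (by linear_combination (ed - d3 * e) / 2 : p * (d - d3) = 0)).resolve_left hne)
  subst hx hd
  exact hne (by linarith)

lemma first_eq_zero {S x1 x2 x3 d1 d2 d3 p1 p2 p3 : ℚ}
    (hp1 : p1 = S - x1^2 - d1^2) (hp2 : p2 = S - x2^2 - d2^2) (hp3 : p3 = S - x3^2 - d3^2)
    (e2 : p1 + p2 + p3 = 0)
    (e3 : d1*p1 + d2*p2 + d3*p3 = 0)
    (e4 : x1*p1 + x2*p2 + x3*p3 = 0)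
    (e5 : d1^2*p1 + d2^2*p2 + d3^2*p3 = 0)
    (e6 : x1^2*p1 + x2^2*p2 + x3^2*p3 = 0)
    (e7 : x1*d1*p1 + x2*d2*p2 + x3*d3*p3 = 0) :
    p1 = 0 := by
  by_contra hne
  -- Each product of affine functions below vanishes at the second and third points.
  have hxx : (x1 - x2) * (x1 - x3) = 0 := (mul_eq_zero.1
    (by linear_combination e6 - (x2 + x3) * e4 + x2 * x3 * e2 :
      p1 * ((x1 - x2) * (x1 - x3)) = 0)).resolve_left hne
  have hdd : (d1 - d2) * (d1 - d3) = 0 := (mul_eq_zero.1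
    (by linear_combination e5 - (d2 + d3) * e3 + d2 * d3 * e2 :
      p1 * ((d1 - d2) * (d1 - d3)) = 0)).resolve_left hne
  have hxd : (x1 - x2) * (d1 - d3) = 0 := (mul_eq_zero.1
    (by linear_combination e7 - x2 * e3 - d3 * e4 + x2 * d3 * e2 :
      p1 * ((x1 - x2) * (d1 - d3)) = 0)).resolve_left hne
  have hdx : (x1 - x3) * (d1 - d2) = 0 := (mul_eq_zero.1
    (by linear_combination e7 - x3 * e3 - d2 * e4 + x3 * d2 * e2 :
      p1 * ((x1 - x3) * (d1 - d2)) = 0)).resolve_left hne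
  have key : (x1 = x2 ∧ d1 = d2) ∨ (x1 = x3 ∧ d1 = d3) := by
    simp only [mul_eq_zero, sub_eq_zero] at hxx hdd hxd hdx
    tauto
  rcases key with ⟨hx, hd⟩ | ⟨hx, hd⟩
  · subst hx hd
    have h : p2 = p1 := hp2.trans hp1.symm
    subst h
    exact hne (first_eq_zero_of_eq hp1 hp3 e2 e3 e4)
  · subst hx hd
    have h : p3 = p1 := hp3.trans hp1.symm
    subst h
    exact hne (first_eq_zero_of_eq hp1 hp2 (by linarith) (by linarith) (by linarith))

/-- The cuboid factor equations, together with positivity of all edges and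
face diagonals, imply the original cuboid equations. -/
theorem cuboid_factor_equations_imply_cuboid_equations
    (x1 x2 x3 d1 d2 d3 L : ℚ)
    (hx1 : x1 > 0) (hx2 : x2 > 0) (hx3 : x3 > 0)
    (hd1 : d1 > 0) (hd2 : d2 > 0) (hd3 : d3 > 0)
    (p0 p1 p2 p3 : ℚ)
    (hp0 : p0 = x1^2 + x2^2 + x3^2 - L^2)
    (hp1 : p1 = x2^2 + x3^2 - d1^2)
    (hp2 : p2 = x3^2 + x1^2 - d2^2)
    (hp3 : p3 = x1^2 + x2^2 - d3^2)
    (e1 : p0 = 0)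
    (e2 : p1 + p2 + p3 = 0)
    (e3 : d1*p1 + d2*p2 + d3*p3 = 0)
    (e4 : x1*p1 + x2*p2 + x3*p3 = 0)
    (e5 : d1^2*p1 + d2^2*p2 + d3^2*p3 = 0)
    (e6 : x1^2*p1 + x2^2*p2 + x3^2*p3 = 0)
    (e7 : x1*d1*p1 + x2*d2*p2 + x3*d3*p3 = 0)
    (e8 : x1^2*d1^2*p1 + x2^2*d2^2*p2 + x3^2*d3^2*p3 = 0) :
    x1^2 + x2^2 + x3^2 = L^2 ∧
    x2^2 + x3^2 = d1^2 ∧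
    x3^2 + x1^2 = d2^2 ∧
    x1^2 + x2^2 = d3^2 := by
  have h1 : p1 = x1^2 + x2^2 + x3^2 - x1^2 - d1^2 := by rw [hp1]; ring
  have h2 : p2 = x1^2 + x2^2 + x3^2 - x2^2 - d2^2 := by rw [hp2]; ring
  have h3 : p3 = x1^2 + x2^2 + x3^2 - x3^2 - d3^2 := by rw [hp3]; ring
  have z1 : p1 = 0 := first_eq_zero h1 h2 h3 e2 e3 e4 e5 e6 e7
  have z2 : p2 = 0 := first_eq_zero h2 h3 h1 (by linarith) (by linarith) (by linarith)
    (by linarith) (by linarith) (by linarith)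
  have z3 : p3 = 0 := by linarith
  exact ⟨by linarith, by linarith, by linarith, by linarith⟩
end

section
/- Let D and w be rational numbers satisfying the sextic equation D·(w²+3)³ + 4·(w−1)²·(w+1)² = 0. Define y1 = −2(w+1)/(w²+3), y2 = 2(w−1)/(w²+3), y3 = (1−w²)/(w²+3). Then the cubic polynomial y³ + y² + D factors over ℚ as (y − y1)(y − y2)(y − y3); in particular y1, y2, y3 are three rational roots of the reduced cubic equation y³ + y² + D = 0. -/
/-- If rational numbers `D` and `w` satisfy the sextic equation
`D*(w²+3)³ + 4*(w−1)²*(w+1)² = 0`, then the reduced cubic `y³ + y² + D`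
factors over ℚ with the three explicit rational roots; in particular
each of them is a root of `y³ + y² + D = 0`. -/
theorem sextic_solution_gives_rational_roots_of_reduced_cubic
    (D w : ℚ)
    (h : D*(w^2+3)^3 + 4*(w-1)^2*(w+1)^2 = 0) :
    (∀ y : ℚ, y^3 + y^2 + D =
      (y - (-(2*(w+1))/(w^2+3))) * (y - (2*(w-1))/(w^2+3)) * (y - (1-w^2)/(w^2+3))) ∧
    ((-(2*(w+1))/(w^2+3))^3 + (-(2*(w+1))/(w^2+3))^2 + D = 0) ∧
    (((2*(w-1))/(w^2+3))^3 + ((2*(w-1))/(w^2+3))^2 + D = 0) ∧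
    (((1-w^2)/(w^2+3))^3 + ((1-w^2)/(w^2+3))^2 + D = 0) := by
  have hs : w^2 + 3 ≠ 0 := by positivity
  -- The sextic equation is linear in `D`; its solution is `-y₁y₂y₃`. The other two Vieta
  -- relations, `y₁ + y₂ + y₃ = -1` and `y₁y₂ + y₁y₃ + y₂y₃ = 0`, hold identically in `w`.
  have hD : D = -(4*(w-1)^2*(w+1)^2) / (w^2+3)^3 := by
    rw [eq_div_iff (pow_ne_zero 3 hs)]
    linarith
  have hfac : ∀ y : ℚ, y^3 + y^2 + D =
      (y - (-(2*(w+1))/(w^2+3))) * (y - (2*(w-1))/(w^2+3)) * (y - (1-w^2)/(w^2+3)) := by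
    intro y
    rw [hD]
    field_simp
    ring
  refine ⟨hfac, ?_, ?_, ?_⟩
  · rw [hfac, sub_self, zero_mul, zero_mul]
  · rw [hfac, sub_self, mul_zero, zero_mul]
  · rw [hfac, sub_self, mul_zero]
end

section
/- Let D be a rational number such that the reduced cubic polynomial y³ + y² + D has three rational roots, i.e. y³ + y² + D = (y − y1)(y − y2)(y − y3) for some rational numbers y1, y2, y3. Then there exists a rational number w satisfying the sextic equation D·(w²+3)³ + 4·(w−1)²·(w+1)² = 0. -/
/-!
Comparing coefficients gives Vieta's relations `y1 + y2 + y3 = -1`,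
`y1 y2 + y1 y3 + y2 y3 = 0` and `D = -y1 y2 y3`. Put `s = y1 + y2` and `p = y1 y2`, so that
`p = s (1 + s)` and `D = p (1 + s)`. If `s ≠ 0`, the solution is `w = (y2 - y1) / s`: then
`w² + 3 = -4 / s` and `w² - 1 = -4 (1 + s) / s`, and the sextic reduces to an identity.
If `s = 0`, then `p = 0`, hence `D = 0`, and `w = 1` works.
-/

/-- If the reduced cubic `y³ + y² + D` has three rational roots, then the
associated sextic equation has a rational solution `w`. -/
theorem reduced_cubic_rational_roots_gives_sextic_solution
    (D y1 y2 y3 : ℚ)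
    (h : ∀ y : ℚ, y^3 + y^2 + D = (y - y1) * (y - y2) * (y - y3)) :
    ∃ w : ℚ, D*(w^2+3)^3 + 4*(w-1)^2*(w+1)^2 = 0 := by
  have h0 := h 0
  have h1 := h 1
  have h2 := h (-1)
  have e1 : y3 = -1 - y1 - y2 := by linarith
  have e2 : y1 * y2 = (y1 + y2) * (1 + (y1 + y2)) := by
    subst e1; linarith
  have e3 : D = y1 * y2 * (1 + (y1 + y2)) := by
    subst e1; linarith
  by_cases hs : y1 + y2 = 0
  · refine ⟨1, ?_⟩
    rw [e3, e2, hs]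
    norm_num
  · refine ⟨(y2 - y1) / (y1 + y2), ?_⟩
    have hw : ((y2 - y1) / (y1 + y2))^2 = -4 / (y1 + y2) - 3 := by
      field_simp
      linear_combination (-4) * e2
    have hfac : ∀ w : ℚ, D*(w^2+3)^3 + 4*(w-1)^2*(w+1)^2
        = D*(w^2+3)^3 + 4*(w^2-1)^2 := fun w => by ring
    rw [hfac, hw, e3, e2]
    field_simp
    ring
end

section
/- Let A0, A1, A2, A3 be rational numbers with A3 ≠ 0, A2² − 3·A1·A3 ≠ 0, and 27·A0·A3² − 9·A1·A2·A3 + 2·A2³ ≠ 0. Set D = −(9·A1·A2·A3 − 27·A0·A3² − 2·A2³)²/(27·(A2² − 3·A1·A3)³). If w is a rational number satisfying D·(w²+3)³ + 4·(w−1)²·(w+1)² = 0, then w ≠ 1, w ≠ −1, and the three rational numbers X1(w), X2(w), X3(w) given by the explicit root formulas are roots of the cubic: for every rational x, A3·x³ + A2·x² + A1·x + A0 = A3·(x − X1(w))·(x − X2(w))·(x − X3(w)). -/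
/-- The first explicit root formula for the general cubic
`A3*x³ + A2*x² + A1*x + A0`. -/
def cubicRoot1 (A0 A1 A2 A3 w : ℚ) : ℚ :=
  ((2*A2^3 - 9*A1*A2*A3 + 27*A0*A3^2)*w^2 + (18*A1*A2*A3 - 6*A2^3)*w
    - 9*A1*A2*A3 + 81*A0*A3^2) / (18*A3*(A2^2 - 3*A1*A3)*(1+w))

/-- The second explicit root formula. -/
def cubicRoot2 (A0 A1 A2 A3 w : ℚ) : ℚ :=
  ((2*A2^3 - 9*A1*A2*A3 + 27*A0*A3^2)*w^2 - (18*A1*A2*A3 - 6*A2^3)*w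
    - 9*A1*A2*A3 + 81*A0*A3^2) / (18*A3*(A2^2 - 3*A1*A3)*(1-w))

/-- The third explicit root formula. -/
def cubicRoot3 (A0 A1 A2 A3 w : ℚ) : ℚ :=
  ((A2^3 - 27*A0*A3^2)*w^2 + 36*A1*A2*A3 - 81*A0*A3^2 - 9*A2^3)
    / (9*A3*(A2^2 - 3*A1*A3)*(1-w)*(1+w))

/-!
Put `P = A2² - 3*A1*A3` and `Q = 2*A2³ - 9*A1*A2*A3 + 27*A0*A3²`. The substitution
`y = 3*A3*x + A2` turns the cubic, multiplied by `27*A3²`, into `y³ - 3*P*y + Q`, and turns the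
three root formulas into `s/(1+w)`, `s/(1-w)` and `-2*s/((1-w)*(1+w))` with
`s = Q*(w²+3)/(6*P)`. These sum to zero, and Vieta's two remaining relations both reduce to
`Q²*(w²+3)³ = 108*P³*(w²-1)²`, which is the sextic equation with denominators cleared.
If `w = ±1`, that equation would force `Q = 0`.
-/

/-- The depressed cubic factors as soon as the cleared sextic equation holds. -/
lemma depressed_cubic_factorization (P Q w y : ℚ) (hP : P ≠ 0) (h1 : 1 + w ≠ 0)
    (h2 : 1 - w ≠ 0) (h : Q^2*(w^2+3)^3 = 108*P^3*(w^2-1)^2) :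
    y^3 - 3*P*y + Q =
      (y - Q*(w^2+3)/(6*P*(1+w))) * (y - Q*(w^2+3)/(6*P*(1-w)))
        * (y - -(Q*(w^2+3))/(3*P*(1-w)*(1+w))) := by
  -- The discrepancy is an explicit multiple of the difference of the two sides of `h`.
  have key : (y - Q*(w^2+3)/(6*P*(1+w))) * (y - Q*(w^2+3)/(6*P*(1-w)))
        * (y - -(Q*(w^2+3))/(3*P*(1-w)*(1+w))) - (y^3 - 3*P*y + Q)
      = (Q - 3*P*y)/(108*P^3*(1-w)^2*(1+w)^2) *
        (Q^2*(w^2+3)^3 - 108*P^3*(w^2-1)^2) := by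
    field_simp
    ring
  rw [h, sub_self, mul_zero] at key
  linarith

/-- If `w` is a rational solution of the sextic equation associated with a
nondegenerate general cubic, then `w ≠ ±1` and the explicit root formulas give
a complete factorization of the cubic over ℚ. -/
theorem sextic_solution_gives_cubic_factorization
    (A0 A1 A2 A3 D w : ℚ)
    (hA3 : A3 ≠ 0)
    (hdisc : A2^2 - 3*A1*A3 ≠ 0)
    (hne : 27*A0*A3^2 - 9*A1*A2*A3 + 2*A2^3 ≠ 0)
    (hD : D = -(9*A1*A2*A3 - 27*A0*A3^2 - 2*A2^3)^2 / (27*(A2^2 - 3*A1*A3)^3))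
    (hw : D*(w^2+3)^3 + 4*(w-1)^2*(w+1)^2 = 0) :
    w ≠ 1 ∧ w ≠ -1 ∧
    ∀ x : ℚ, A3*x^3 + A2*x^2 + A1*x + A0 =
      A3 * (x - cubicRoot1 A0 A1 A2 A3 w) * (x - cubicRoot2 A0 A1 A2 A3 w)
        * (x - cubicRoot3 A0 A1 A2 A3 w) := by
  set P := A2^2 - 3*A1*A3 with hPdef
  set Q := 27*A0*A3^2 - 9*A1*A2*A3 + 2*A2^3 with hQdef
  have hsextic : Q^2*(w^2+3)^3 = 108*P^3*(w^2-1)^2 := by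
    have hDQ : D * (27*P^3) = -Q^2 := by
      rw [hD, div_mul_cancel₀ _ (by positivity), hQdef]
      ring
    linear_combination (w^2+3)^3 * hDQ - 27*P^3 * hw
  have hQ2 : Q^2 ≠ 0 := pow_ne_zero 2 hne
  have hw1 : w ≠ 1 := by
    rintro rfl
    apply hQ2
    linarith
  have hw2 : w ≠ -1 := by
    rintro rfl
    apply hQ2
    linarith
  refine ⟨hw1, hw2, fun x => ?_⟩
  have h1 : 1 + w ≠ 0 := fun h => hw2 (by linarith)
  have h2 : 1 - w ≠ 0 := fun h => hw1 (by linarith)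
  have e1 : 3*A3*cubicRoot1 A0 A1 A2 A3 w + A2 = Q*(w^2+3)/(6*P*(1+w)) := by
    rw [cubicRoot1, ← hPdef]
    field_simp
    rw [hPdef, hQdef]
    ring
  have e2 : 3*A3*cubicRoot2 A0 A1 A2 A3 w + A2 = Q*(w^2+3)/(6*P*(1-w)) := by
    rw [cubicRoot2, ← hPdef]
    field_simp
    rw [hPdef, hQdef]
    ring
  have e3 : 3*A3*cubicRoot3 A0 A1 A2 A3 w + A2 = -(Q*(w^2+3))/(3*P*(1-w)*(1+w)) := by
    rw [cubicRoot3, ← hPdef]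
    field_simp
    rw [hPdef, hQdef]
    ring
  have hfac := depressed_cubic_factorization P Q w (3*A3*x + A2) hdisc h1 h2 hsextic
  rw [← e1, ← e2, ← e3] at hfac
  have h27 : 27*A3^2 ≠ 0 := by positivity
  apply mul_left_cancel₀ h27
  rw [hPdef, hQdef] at hfac
  linear_combination hfac
end

section
/- Let A0, A1, A2, A3 be rational numbers with A3 ≠ 0, A2² − 3·A1·A3 ≠ 0, and 27·A0·A3² − 9·A1·A2·A3 + 2·A2³ ≠ 0. If the cubic polynomial has three rational roots, i.e. A3·x³ + A2·x² + A1·x + A0 = A3·(x − x1)·(x − x2)·(x − x3) for all rational x, for some rational numbers x1, x2, x3, then there exists a rational number w satisfying D·(w²+3)³ + 4·(w−1)²·(w+1)² = 0, where D = −(9·A1·A2·A3 − 27·A0·A3² − 2·A2³)²/(27·(A2² − 3·A1·A3)³). -/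
/-!
Vieta's formulas give, with `y = x2 + x3 - 2*x1` and `b = 3*(x2 - x3)`,
`12*(A2² - 3*A1*A3) = A3²*(3*y² + b²)` and
`4*(27*A0*A3² - 9*A1*A2*A3 + 2*A2³) = A3³*y*(y² - b²)`.
Hence `D = -4*y²*(y² - b²)²/(3*y² + b²)³`. The second nondegeneracy condition forces `y ≠ 0`, and
`w = b/y` turns `D*(w² + 3)³` into `-4*(w² - 1)²`.
-/

/-- If a nondegenerate general cubic `A3*x³ + A2*x² + A1*x + A0` has three
rational roots, then the associated sextic equation has a rational
solution `w`. -/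
theorem cubic_rational_roots_gives_sextic_solution
    (A0 A1 A2 A3 x1 x2 x3 : ℚ)
    (hA3 : A3 ≠ 0)
    (hdisc : A2^2 - 3*A1*A3 ≠ 0)
    (hne : 27*A0*A3^2 - 9*A1*A2*A3 + 2*A2^3 ≠ 0)
    (hroots : ∀ x : ℚ, A3*x^3 + A2*x^2 + A1*x + A0
      = A3 * (x - x1) * (x - x2) * (x - x3)) :
    ∃ w : ℚ,
      (-(9*A1*A2*A3 - 27*A0*A3^2 - 2*A2^3)^2 / (27*(A2^2 - 3*A1*A3)^3))
        * (w^2+3)^3 + 4*(w-1)^2*(w+1)^2 = 0 := by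
  -- Vieta's formulas, from the values of both sides at `0`, `1` and `-1`.
  have h0 := hroots 0
  have h1 := hroots 1
  have h2 := hroots (-1)
  have e0 : A0 = -A3 * (x1 * x2 * x3) := by linear_combination h0
  have e2 : A2 = -A3 * (x1 + x2 + x3) := by linear_combination (h1 + h2) / 2 - h0
  have e1 : A1 = A3 * (x1 * x2 + x1 * x3 + x2 * x3) := by linear_combination (h1 - h2) / 2
  clear h0 h1 h2 hroots
  have hy : x2 + x3 - 2 * x1 ≠ 0 := by
    intro h
    apply hne
    subst e0 e1 e2
    linear_combination A3 ^ 3 * (2 * x2 - x1 - x3) * (2 * x3 - x1 - x2) * h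
  obtain ⟨y, hyd⟩ : ∃ y, y = x2 + x3 - 2 * x1 := ⟨_, rfl⟩
  obtain ⟨b, hbd⟩ : ∃ b, b = 3 * (x2 - x3) := ⟨_, rfl⟩
  rw [← hyd] at hy
  have hQ : A2^2 - 3*A1*A3 = A3^2 * (3*y^2 + b^2) / 12 := by
    subst e0 e1 e2 hyd hbd
    ring
  have hN : 9*A1*A2*A3 - 27*A0*A3^2 - 2*A2^3 = -(A3^3 * y * (y^2 - b^2) / 4) := by
    subst e0 e1 e2 hyd hbd
    ring
  have hq : 3*y^2 + b^2 ≠ 0 := by positivity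
  refine ⟨b / y, ?_⟩
  rw [hQ, hN]
  field_simp
  ring
end

section
/- Let x1, x2, x3 be rational numbers such that u1 = 2x1−x2−x3, u2 = 2x2−x3−x1, u3 = 2x3−x1−x2 are all nonzero, and set D = −8·(u1·u2·u3)²/(u1² + u2² + u3²)³. Then for every rational w the polynomial identity D·(w²+3)³ + 4·(w−1)²·(w+1)² = D·(w − (u1−u2)/u3)·(w + (u1−u2)/u3)·(w − (u2−u3)/u1)·(w + (u2−u3)/u1)·(w − (u3−u1)/u2)·(w + (u3−u1)/u2) holds; in particular, each of the six rational numbers ±(u1−u2)/u3, ±(u2−u3)/u1, ±(u3−u1)/u2 is a root of the sextic equation D·(w²+3)³ + 4·(w−1)²·(w+1)² = 0. -/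
/-!
Since `u1 + u2 + u3 = 0`, one has `u3 = -u1 - u2`, and after multiplying by the nonzero
quantities `u1`, `u2`, `u3` and `u1² + u2² + u3²` the factorization becomes a polynomial identity
in `u1`, `u2`, `w`. Each of the six numbers annihilates one linear factor, so it is a root.
-/

/-- With `D = −8*(u1*u2*u3)²/(u1²+u2²+u3²)³`, the sextic polynomial
`D*(w²+3)³ + 4*(w−1)²*(w+1)²` factors explicitly, and each of the six
rational numbers `±(u1−u2)/u3`, `±(u2−u3)/u1`, `±(u3−u1)/u2` is a root of
the sextic equation. -/
theorem sextic_explicit_factorization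
    (x1 x2 x3 u1 u2 u3 D : ℚ)
    (hu1 : u1 = 2*x1-x2-x3) (hu2 : u2 = 2*x2-x3-x1) (hu3 : u3 = 2*x3-x1-x2)
    (h1 : u1 ≠ 0) (h2 : u2 ≠ 0) (h3 : u3 ≠ 0)
    (hD : D = -(8*(u1*u2*u3)^2) / (u1^2 + u2^2 + u3^2)^3) :
    (∀ w : ℚ, D*(w^2+3)^3 + 4*(w-1)^2*(w+1)^2
      = D * (w - (u1-u2)/u3) * (w + (u1-u2)/u3)
          * (w - (u2-u3)/u1) * (w + (u2-u3)/u1)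
          * (w - (u3-u1)/u2) * (w + (u3-u1)/u2)) ∧
    D*(((u1-u2)/u3)^2+3)^3 + 4*((u1-u2)/u3-1)^2*((u1-u2)/u3+1)^2 = 0 ∧
    D*((-((u1-u2)/u3))^2+3)^3 + 4*(-((u1-u2)/u3)-1)^2*(-((u1-u2)/u3)+1)^2 = 0 ∧
    D*(((u2-u3)/u1)^2+3)^3 + 4*((u2-u3)/u1-1)^2*((u2-u3)/u1+1)^2 = 0 ∧
    D*((-((u2-u3)/u1))^2+3)^3 + 4*(-((u2-u3)/u1)-1)^2*(-((u2-u3)/u1)+1)^2 = 0 ∧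
    D*(((u3-u1)/u2)^2+3)^3 + 4*((u3-u1)/u2-1)^2*((u3-u1)/u2+1)^2 = 0 ∧
    D*((-((u3-u1)/u2))^2+3)^3 + 4*(-((u3-u1)/u2)-1)^2*(-((u3-u1)/u2)+1)^2 = 0 := by
  have hS : u1^2 + u2^2 + u3^2 ≠ 0 := by positivity
  have hu : u3 = -u1 - u2 := by rw [hu1, hu2, hu3]; ring
  have key : ∀ w : ℚ, D*(w^2+3)^3 + 4*(w-1)^2*(w+1)^2
      = D * (w - (u1-u2)/u3) * (w + (u1-u2)/u3)
          * (w - (u2-u3)/u1) * (w + (u2-u3)/u1)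
          * (w - (u3-u1)/u2) * (w + (u3-u1)/u2) := by
    intro w
    clear hu1 hu2 hu3
    rw [hD]
    -- Once the denominators are cleared with `u3` kept as an atom, the remaining identity
    -- is polynomial and holds only modulo `u1 + u2 + u3 = 0`.
    field_simp
    subst hu
    ring
  refine ⟨key, ?_, ?_, ?_, ?_, ?_, ?_⟩ <;> rw [key] <;> ring
end

section
/- Let A0, A1, A2, A3 be rational numbers with A3 ≠ 0, A2² − 3·A1·A3 ≠ 0, and 27·A0·A3² − 9·A1·A2·A3 + 2·A2³ ≠ 0, and suppose the cubic has three rational roots x1, x2, x3, i.e. A3·x³ + A2·x² + A1·x + A0 = A3·(x − x1)·(x − x2)·(x − x3) for all rational x. Then 2x3 − x1 − x2 ≠ 0, and the rational number w = 3·(x1 − x2)/(2x3 − x1 − x2) satisfies the sextic equation D·(w²+3)³ + 4·(w−1)²·(w+1)² = 0, where D = −(9·A1·A2·A3 − 27·A0·A3² − 2·A2³)²/(27·(A2² − 3·A1·A3)³). -/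
/-!
Put `u = 2 x3 - x1 - x2` and `v = x1 - x2`. Vieta's formulas give
`A2² - 3 A1 A3 = A3² (u² + 3 v²) / 4` and
`27 A0 A3² - 9 A1 A2 A3 + 2 A2³ = -A3³ u (u² - 9 v²) / 4`.
The second expression is nonzero, hence `u ≠ 0`. With `w = 3 v / u` one has
`w² + 3 = 3 (u² + 3 v²) / u²` and `w² - 1 = (9 v² - u²) / u²`, so both terms of the
sextic equal `4 (u² - 9 v²)² / u⁴` up to sign, and they cancel.
-/

/-- If a nondegenerate general cubic has three rational roots `x1, x2, x3`,
then `2x3 − x1 − x2 ≠ 0` and `w = 3*(x1−x2)/(2x3−x1−x2)` solves the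
associated sextic equation. -/
theorem conversion_formula_solves_sextic
    (A0 A1 A2 A3 x1 x2 x3 : ℚ)
    (hA3 : A3 ≠ 0)
    (hdisc : A2^2 - 3*A1*A3 ≠ 0)
    (hne : 27*A0*A3^2 - 9*A1*A2*A3 + 2*A2^3 ≠ 0)
    (hroots : ∀ x : ℚ, A3*x^3 + A2*x^2 + A1*x + A0
      = A3 * (x - x1) * (x - x2) * (x - x3)) :
    2*x3 - x1 - x2 ≠ 0 ∧
    (-(9*A1*A2*A3 - 27*A0*A3^2 - 2*A2^3)^2 / (27*(A2^2 - 3*A1*A3)^3))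
        * ((3*(x1-x2)/(2*x3-x1-x2))^2+3)^3
      + 4*(3*(x1-x2)/(2*x3-x1-x2)-1)^2*(3*(x1-x2)/(2*x3-x1-x2)+1)^2 = 0 := by
  -- Vieta's formulas, from the values of the cubic at `0, 1, -1, 2`.
  have h0 := hroots 0
  have h1 := hroots 1
  have h2 := hroots (-1)
  have h3 := hroots 2
  have e2 : A2 = -A3 * (x1 + x2 + x3) := by linear_combination (h1 + h2) / 2 - h0
  have e1 : A1 = A3 * (x1*x2 + x1*x3 + x2*x3) := by
    linear_combination -h0 / 2 + h1 - h2 / 3 - h3 / 6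
  have e0 : A0 = -A3 * (x1*x2*x3) := by linear_combination h0
  clear h0 h1 h2 h3 hroots
  obtain ⟨u, hu⟩ : ∃ u, u = 2*x3 - x1 - x2 := ⟨_, rfl⟩
  obtain ⟨v, hv⟩ : ∃ v, v = x1 - x2 := ⟨_, rfl⟩
  have hQ : A2^2 - 3*A1*A3 = A3^2 * (u^2 + 3*v^2) / 4 := by
    rw [e2, e1, hu, hv]; ring
  have hN : 27*A0*A3^2 - 9*A1*A2*A3 + 2*A2^3 = -(A3^3 * u * (u^2 - 9*v^2)) / 4 := by
    rw [e2, e1, e0, hu, hv]; ring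
  have hN' : 9*A1*A2*A3 - 27*A0*A3^2 - 2*A2^3 = A3^3 * u * (u^2 - 9*v^2) / 4 := by
    linear_combination -hN
  rw [← hu, ← hv, hN', hQ]
  rw [hQ] at hdisc
  rw [hN] at hne
  have hu0 : u ≠ 0 := by
    rintro rfl
    simp at hne
  have hs : u^2 + 3*v^2 ≠ 0 := by
    intro h
    simp [h] at hdisc
  refine ⟨hu0, ?_⟩
  have hw : (3*v/u)^2 + 3 = 3 * (u^2 + 3*v^2) / u^2 := by
    field_simp
    ring
  rw [hw]
  -- As an independent symbol, `u² + 3 v²` cancels without being expanded.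
  generalize u^2 + 3*v^2 = s at hs
  field_simp
  ring
end

section
/- Let A0, A1, A2, A3 be rational numbers with A3 ≠ 0, A2² − 3·A1·A3 ≠ 0, and 27·A0·A3² − 9·A1·A2·A3 + 2·A2³ ≠ 0, and suppose A3·x³ + A2·x² + A1·x + A0 = A3·(x − x1)·(x − x2)·(x − x3) for all rational x, with rational x1, x2, x3. Then 2x3 − x1 − x2 ≠ 0, and setting w = 3·(x1 − x2)/(2x3 − x1 − x2) one has w ≠ 1, w ≠ −1, and the explicit root formulas recover the roots: X1(w) = x1, X2(w) = x2, and X3(w) = x3. -/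
/-- For a nondegenerate cubic with three rational roots `x1, x2, x3`, setting
`w = 3*(x1−x2)/(2x3−x1−x2)` one has `w ≠ ±1`, and the explicit root formulas
recover the roots: `X1(w) = x1`, `X2(w) = x2`, `X3(w) = x3`. -/
theorem root_formulas_recover_roots
    (A0 A1 A2 A3 x1 x2 x3 : ℚ)
    (hA3 : A3 ≠ 0)
    (hdisc : A2^2 - 3*A1*A3 ≠ 0)
    (hne : 27*A0*A3^2 - 9*A1*A2*A3 + 2*A2^3 ≠ 0)
    (hroots : ∀ x : ℚ, A3*x^3 + A2*x^2 + A1*x + A0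
      = A3 * (x - x1) * (x - x2) * (x - x3)) :
    2*x3 - x1 - x2 ≠ 0 ∧
    3*(x1-x2)/(2*x3-x1-x2) ≠ 1 ∧
    3*(x1-x2)/(2*x3-x1-x2) ≠ -1 ∧
    cubicRoot1 A0 A1 A2 A3 (3*(x1-x2)/(2*x3-x1-x2)) = x1 ∧
    cubicRoot2 A0 A1 A2 A3 (3*(x1-x2)/(2*x3-x1-x2)) = x2 ∧
    cubicRoot3 A0 A1 A2 A3 (3*(x1-x2)/(2*x3-x1-x2)) = x3 := by
  -- Vieta's relations, by comparing the values at `0, 1, -1, 2`.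
  have h0 := hroots 0
  have h1 := hroots 1
  have h2 := hroots (-1)
  have h3 := hroots 2
  have e0 : A0 = -(A3 * (x1 * x2 * x3)) := by linear_combination h0
  have e2 : A2 = -(A3 * (x1 + x2 + x3)) := by
    linear_combination (h1 + h2) / 2 - h0
  have e1 : A1 = A3 * (x1 * x2 + x1 * x3 + x2 * x3) := by
    linear_combination (-h3 + 6 * h1 - 2 * h2 - 3 * h0) / 6
  subst e0 e1 e2
  have hprod : (2*x3 - x1 - x2) * (2*x1 - x2 - x3) * (2*x2 - x1 - x3) ≠ 0 := by
    intro h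
    apply hne
    linear_combination (-A3^3) * h
  have ht : 2*x3 - x1 - x2 ≠ 0 := fun h => hprod (by rw [h]; ring)
  have hu : 2*x1 - x2 - x3 ≠ 0 := fun h => hprod (by rw [h]; ring)
  have hv : 2*x2 - x1 - x3 ≠ 0 := fun h => hprod (by rw [h]; ring)
  obtain ⟨w, hw⟩ : ∃ w, w = 3*(x1-x2)/(2*x3-x1-x2) := ⟨_, rfl⟩
  have hm : 1 - w = -2 * (2*x1 - x2 - x3) / (2*x3 - x1 - x2) := by
    rw [hw]; field_simp; ring
  have hp : 1 + w = -2 * (2*x2 - x1 - x3) / (2*x3 - x1 - x2) := by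
    rw [hw]; field_simp; ring
  have hm0 : 1 - w ≠ 0 := by
    rw [hm]; exact div_ne_zero (mul_ne_zero (by norm_num) hu) ht
  have hp0 : 1 + w ≠ 0 := by
    rw [hp]; exact div_ne_zero (mul_ne_zero (by norm_num) hv) ht
  rw [← hw]
  refine ⟨ht, fun h => hm0 (by rw [h]; ring), fun h => hp0 (by rw [h]; ring), ?_, ?_, ?_⟩
  · rw [cubicRoot1,
      div_eq_iff (mul_ne_zero (mul_ne_zero (mul_ne_zero (by norm_num) hA3) hdisc) hp0), hw]
    field_simp
    ring
  · rw [cubicRoot2,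
      div_eq_iff (mul_ne_zero (mul_ne_zero (mul_ne_zero (by norm_num) hA3) hdisc) hm0), hw]
    field_simp
    ring
  · rw [cubicRoot3,
      div_eq_iff (mul_ne_zero
      (mul_ne_zero (mul_ne_zero (mul_ne_zero (by norm_num) hA3) hdisc) hm0) hp0)]
    have hwt : w * (2*x3 - x1 - x2) = 3*(x1 - x2) := by rw [hw]; field_simp
    -- The difference of the two sides is `a * w² + c`; multiplying by `t²` turns `w²` into
    -- `(w * t)²`, whose value is known.
    apply mul_left_cancel₀ (pow_ne_zero 2 ht)
    linear_combination
      ((-(A3 * (x1 + x2 + x3)))^3 - 27*(-(A3 * (x1 * x2 * x3)))*A3^2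
        + 9*A3*((-(A3 * (x1 + x2 + x3)))^2
          - 3*(A3 * (x1 * x2 + x1 * x3 + x2 * x3))*A3)*x3)
        * (w * (2*x3 - x1 - x2) + 3*(x1 - x2)) * hwt
end

section
/- Let x1, x2, x3 be rational numbers with x1² + x2² + x3² − x1·x2 − x2·x3 − x3·x1 ≠ 0, and let w be a rational number with w ≠ 1 and w ≠ −1. Let X1(w), X2(w), X3(w) be given by the explicit root formulas for the monic cubic with coefficients A3 = 1, A2 = −(x1+x2+x3), A1 = x1·x2+x2·x3+x3·x1, A0 = −x1·x2·x3. Then the identity 3·(X1(w) − X2(w)) = w·(2·X3(w) − X1(w) − X2(w)) holds; in particular, whenever 2·X3(w) − X1(w) − X2(w) ≠ 0, one has 3·(X1(w) − X2(w))/(2·X3(w) − X1(w) − X2(w)) = w. -/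
/-- For the monic cubic with roots `x1, x2, x3` (nondegenerate) and any
rational `w ≠ ±1`, the root formulas satisfy
`3*(X1(w) − X2(w)) = w*(2*X3(w) − X1(w) − X2(w))`; in particular, whenever
`2*X3(w) − X1(w) − X2(w) ≠ 0`, the conversion formula returns `w`. -/
theorem conversion_formula_is_inverse
    (x1 x2 x3 w : ℚ)
    (hdisc : x1^2 + x2^2 + x3^2 - x1*x2 - x2*x3 - x3*x1 ≠ 0)
    (hw1 : w ≠ 1) (hw2 : w ≠ -1)
    (A0 A1 A2 A3 : ℚ)
    (hA3 : A3 = 1) (hA2 : A2 = -(x1+x2+x3))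
    (hA1 : A1 = x1*x2+x2*x3+x3*x1) (hA0 : A0 = -(x1*x2*x3)) :
    3*(cubicRoot1 A0 A1 A2 A3 w - cubicRoot2 A0 A1 A2 A3 w)
      = w * (2*cubicRoot3 A0 A1 A2 A3 w - cubicRoot1 A0 A1 A2 A3 w
              - cubicRoot2 A0 A1 A2 A3 w) ∧
    (2*cubicRoot3 A0 A1 A2 A3 w - cubicRoot1 A0 A1 A2 A3 w
        - cubicRoot2 A0 A1 A2 A3 w ≠ 0 →
      3*(cubicRoot1 A0 A1 A2 A3 w - cubicRoot2 A0 A1 A2 A3 w)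
        / (2*cubicRoot3 A0 A1 A2 A3 w - cubicRoot1 A0 A1 A2 A3 w
            - cubicRoot2 A0 A1 A2 A3 w) = w) := by
  have hp : 1 + w ≠ 0 := fun h => hw2 (by linarith)
  have hm : 1 - w ≠ 0 := fun h => hw1 (by linarith)
  have key : 3*(cubicRoot1 A0 A1 A2 A3 w - cubicRoot2 A0 A1 A2 A3 w)
      = w * (2*cubicRoot3 A0 A1 A2 A3 w - cubicRoot1 A0 A1 A2 A3 w
              - cubicRoot2 A0 A1 A2 A3 w) := by
    -- The quantity in `hdisc` is the factor `A2² - 3*A1*A3` of the denominators.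
    have hD : A2^2 - 3*A1 ≠ 0 := by
      intro h
      apply hdisc
      rw [hA2, hA1] at h
      linarith
    -- With denominators cleared, the identity is polynomial in free variables
    -- `A0`, `A1`, `A2`, `w`.
    clear hA0 hA1 hA2 hdisc
    subst hA3
    simp only [cubicRoot1, cubicRoot2, cubicRoot3, one_pow, mul_one]
    field_simp
    ring
  exact ⟨key, fun h => by rw [key, mul_div_assoc, div_self h, mul_one]⟩
end

section
/- Let x1, x2, x3 be rational numbers such that u1 = 2x1−x2−x3, u2 = 2x2−x3−x1, u3 = 2x3−x1−x2 are all nonzero, and let X1, X2, X3 be the explicit root formulas for the monic cubic with coefficients A3 = 1, A2 = −(x1+x2+x3), A1 = x1·x2+x2·x3+x3·x1, A0 = −x1·x2·x3. Then substituting w = (u2−u3)/u1 yields the cyclic permutation (X1(w), X2(w), X3(w)) = (x2, x3, x1), and substituting w = (u3−u1)/u2 yields the cyclic permutation (X1(w), X2(w), X3(w)) = (x3, x1, x2). -/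
/-- The first substitution, with the coefficients and the `u`'s written out in the roots. In this
form the second substitution is the instance at `(x2, x3, x1)`. -/
theorem cubicRoots_first_substitution (x1 x2 x3 A0 A1 A2 w : ℚ)
    (h1 : 2*x1-x2-x3 ≠ 0) (h2 : 2*x2-x3-x1 ≠ 0) (h3 : 2*x3-x1-x2 ≠ 0)
    (hA2 : A2 = -(x1+x2+x3)) (hA1 : A1 = x1*x2+x2*x3+x3*x1) (hA0 : A0 = -(x1*x2*x3))
    (hw : w = ((2*x2-x3-x1)-(2*x3-x1-x2))/(2*x1-x2-x3)) :
    cubicRoot1 A0 A1 A2 1 w = x2 ∧ cubicRoot2 A0 A1 A2 1 w = x3 ∧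
      cubicRoot3 A0 A1 A2 1 w = x1 := by
  have hQ : A2^2 - 3*A1*1 ≠ 0 := by
    have hpos : 0 < (2*x1-x2-x3)^2 := by positivity
    have : 0 < A2^2 - 3*A1*1 := by
      subst hA2 hA1
      nlinarith [sq_nonneg (x2-x3)]
    exact this.ne'
  have hp : 1 + w = -2*(2*x3-x1-x2)/(2*x1-x2-x3) := by
    rw [hw]; field_simp; ring
  have hm : 1 - w = -2*(2*x2-x3-x1)/(2*x1-x2-x3) := by
    rw [hw]; field_simp; ring
  have hp0 : 1 + w ≠ 0 := by
    rw [hp]; exact div_ne_zero (mul_ne_zero (by norm_num) h3) h1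
  have hm0 : 1 - w ≠ 0 := by
    rw [hm]; exact div_ne_zero (mul_ne_zero (by norm_num) h2) h1
  refine ⟨?_, ?_, ?_⟩
  · rw [cubicRoot1, div_eq_iff (by simp only [ne_eq, mul_eq_zero, not_or]; norm_num at *; tauto)]
    subst hA2 hA1 hA0 hw
    field_simp
    ring
  · rw [cubicRoot2, div_eq_iff (by simp only [ne_eq, mul_eq_zero, not_or]; norm_num at *; tauto)]
    subst hA2 hA1 hA0 hw
    field_simp
    ring
  · rw [cubicRoot3, div_eq_iff (by simp only [ne_eq, mul_eq_zero, not_or]; norm_num at *; tauto)]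
    have hwu : w*(2*x1-x2-x3) = 3*(x2-x3) := by
      rw [hw]; field_simp; ring
    apply mul_right_cancel₀ (pow_ne_zero 2 h1)
    subst hA2 hA1 hA0
    -- The difference of the two sides is `(a w² + b) u1²` with `a` the first factor below.
    linear_combination (((-(x1+x2+x3))^3 + 27*(x1*x2*x3))
      + 9*x1*((x1+x2+x3)^2 - 3*(x1*x2+x2*x3+x3*x1)))
      * (w*(2*x1-x2-x3) + 3*(x2-x3)) * hwu

/-- Substituting `w = (u2−u3)/u1` into the root formulas for the monic cubic
with roots `x1, x2, x3` yields the cyclic permutation `(x2, x3, x1)`, and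
substituting `w = (u3−u1)/u2` yields the cyclic permutation `(x3, x1, x2)`. -/
theorem root_formulas_cyclic_permutations
    (x1 x2 x3 u1 u2 u3 : ℚ)
    (hu1 : u1 = 2*x1-x2-x3) (hu2 : u2 = 2*x2-x3-x1) (hu3 : u3 = 2*x3-x1-x2)
    (h1 : u1 ≠ 0) (h2 : u2 ≠ 0) (h3 : u3 ≠ 0)
    (A0 A1 A2 A3 : ℚ)
    (hA3 : A3 = 1) (hA2 : A2 = -(x1+x2+x3))
    (hA1 : A1 = x1*x2+x2*x3+x3*x1) (hA0 : A0 = -(x1*x2*x3)) :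
    (cubicRoot1 A0 A1 A2 A3 ((u2-u3)/u1) = x2 ∧
     cubicRoot2 A0 A1 A2 A3 ((u2-u3)/u1) = x3 ∧
     cubicRoot3 A0 A1 A2 A3 ((u2-u3)/u1) = x1) ∧
    (cubicRoot1 A0 A1 A2 A3 ((u3-u1)/u2) = x3 ∧
     cubicRoot2 A0 A1 A2 A3 ((u3-u1)/u2) = x1 ∧
     cubicRoot3 A0 A1 A2 A3 ((u3-u1)/u2) = x2) := by
  subst hA3 hu1 hu2 hu3
  exact ⟨cubicRoots_first_substitution x1 x2 x3 A0 A1 A2 _ h1 h2 h3 hA2 hA1 hA0 rfl,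
    cubicRoots_first_substitution x2 x3 x1 A0 A1 A2 _ h2 h3 h1
      (by rw [hA2]; ring) (by rw [hA1]; ring) (by rw [hA0]; ring) rfl⟩
end

section
/- Let x1, x2, x3 be rational numbers such that u1 = 2x1−x2−x3, u2 = 2x2−x3−x1, u3 = 2x3−x1−x2 are all nonzero, and let X1, X2, X3 be the explicit root formulas for the monic cubic with coefficients A3 = 1, A2 = −(x1+x2+x3), A1 = x1·x2+x2·x3+x3·x1, A0 = −x1·x2·x3. Then substituting w = −(u1−u2)/u3 yields the transposition (X1(w), X2(w), X3(w)) = (x2, x1, x3), and substituting w = −(u2−u3)/u1 yields the transposition (X1(w), X2(w), X3(w)) = (x3, x2, x1). -/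
/-- The first substitution, with the coefficients and the `u`'s written out in the roots. -/
lemma transposition_of_roots (a b c : ℚ)
    (ha : 2*a-b-c ≠ 0) (hb : 2*b-c-a ≠ 0) (hc : 2*c-a-b ≠ 0) :
    cubicRoot1 (-(a*b*c)) (a*b+b*c+c*a) (-(a+b+c)) 1
      (-(((2*a-b-c)-(2*b-c-a))/(2*c-a-b))) = b ∧
    cubicRoot2 (-(a*b*c)) (a*b+b*c+c*a) (-(a+b+c)) 1
      (-(((2*a-b-c)-(2*b-c-a))/(2*c-a-b))) = a ∧
    cubicRoot3 (-(a*b*c)) (a*b+b*c+c*a) (-(a+b+c)) 1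
      (-(((2*a-b-c)-(2*b-c-a))/(2*c-a-b))) = c := by
  have hD : (-(a+b+c))^2 - 3*(a*b+b*c+c*a)*1 ≠ 0 := by
    -- `4 (A2² - 3 A1) = (2a - b - c)² + 3 (b - c)²`
    have := sq_pos_of_ne_zero ha
    nlinarith [sq_nonneg (b-c)]
  obtain ⟨w, hw⟩ : ∃ w, w = -(((2*a-b-c)-(2*b-c-a))/(2*c-a-b)) := ⟨_, rfl⟩
  rw [← hw]
  have hwc : w * (2*c-a-b) = -((2*a-b-c)-(2*b-c-a)) := by
    rw [hw]; field_simp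
  have hp : 1 + w ≠ 0 := by
    intro h
    apply ha
    linear_combination (-(2*c-a-b)/2) * h + hwc / 2
  have hm : 1 - w ≠ 0 := by
    intro h
    apply hb
    linear_combination (-(2*c-a-b)/2) * h - hwc / 2
  have hc2 : (2*c-a-b)^2 ≠ 0 := pow_ne_zero 2 hc
  have hw2 : w^2 * (2*c-a-b)^2 = (3*a-3*b)^2 := by
    rw [← mul_pow, hwc]; ring
  unfold cubicRoot1 cubicRoot2 cubicRoot3
  have h18 : (18*1 : ℚ) ≠ 0 := by norm_num
  have h9 : (9*1 : ℚ) ≠ 0 := by norm_num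
  refine ⟨?_, ?_, ?_⟩
  · rw [div_eq_iff (mul_ne_zero (mul_ne_zero h18 hD) hp), hw]
    field_simp
    ring
  · rw [div_eq_iff (mul_ne_zero (mul_ne_zero h18 hD) hm), hw]
    field_simp
    ring
  · rw [div_eq_iff (mul_ne_zero (mul_ne_zero (mul_ne_zero h9 hD) hm) hp)]
    -- The cleared equation involves `w` only through `w²`; scale by `(2c - a - b)²`.
    apply mul_right_cancel₀ hc2
    linear_combination
      ((-(a+b+c))^3 + 27*(a*b*c) + 9*c*((-(a+b+c))^2 - 3*(a*b+b*c+c*a))) * hw2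

/-- Substituting `w = −(u1−u2)/u3` into the root formulas for the monic cubic
with roots `x1, x2, x3` yields the transposition `(x2, x1, x3)`, and
substituting `w = −(u2−u3)/u1` yields the transposition `(x3, x2, x1)`. -/
theorem root_formulas_transpositions
    (x1 x2 x3 u1 u2 u3 : ℚ)
    (hu1 : u1 = 2*x1-x2-x3) (hu2 : u2 = 2*x2-x3-x1) (hu3 : u3 = 2*x3-x1-x2)
    (h1 : u1 ≠ 0) (h2 : u2 ≠ 0) (h3 : u3 ≠ 0)
    (A0 A1 A2 A3 : ℚ)
    (hA3 : A3 = 1) (hA2 : A2 = -(x1+x2+x3))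
    (hA1 : A1 = x1*x2+x2*x3+x3*x1) (hA0 : A0 = -(x1*x2*x3)) :
    (cubicRoot1 A0 A1 A2 A3 (-((u1-u2)/u3)) = x2 ∧
     cubicRoot2 A0 A1 A2 A3 (-((u1-u2)/u3)) = x1 ∧
     cubicRoot3 A0 A1 A2 A3 (-((u1-u2)/u3)) = x3) ∧
    (cubicRoot1 A0 A1 A2 A3 (-((u2-u3)/u1)) = x3 ∧
     cubicRoot2 A0 A1 A2 A3 (-((u2-u3)/u1)) = x2 ∧
     cubicRoot3 A0 A1 A2 A3 (-((u2-u3)/u1)) = x1) := by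
  subst hu1 hu2 hu3 hA3 hA2 hA1 hA0
  refine ⟨transposition_of_roots x1 x2 x3 h1 h2 h3, ?_⟩
  -- The coefficients are invariant under the cyclic relabelling.
  have e0 : x1*x2*x3 = x2*x3*x1 := by ring
  have e1 : x1*x2+x2*x3+x3*x1 = x2*x3+x3*x1+x1*x2 := by ring
  have e2 : x1+x2+x3 = x2+x3+x1 := by ring
  rw [e0, e1, e2]
  exact transposition_of_roots x2 x3 x1 h2 h3 h1
end

section
/- Let b and c be rational numbers such that Q = b²·c² + 2·b² − 3·b²·c + c − b·c² + 2·b ≠ 0. Define E11 = −b·(c² + 2 − 4c)/Q, E10 = −(b²·c² + 2·b² − 3·b²·c − c)/Q, and E01 = −b·(c² + 2 − 2c)/Q. Then these quantities solve the biquadratic cuboid equation with L = 1: (2·E11)² + (E01² + 1 − E10²)² − 8·E01² = 0. -/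
/-- Ramsden's parametrization: for rational parameters `b, c` with nonzero
denominator `Q = b²c² + 2b² − 3b²c + c − bc² + 2b`, the quantities `E11`,
`E10`, `E01` solve the biquadratic cuboid equation with `L = 1`. -/
theorem ramsden_parametrization_solves_biquadratic
    (b c : ℚ)
    (hQ : b^2*c^2 + 2*b^2 - 3*b^2*c + c - b*c^2 + 2*b ≠ 0)
    (E11 E10 E01 : ℚ)
    (hE11 : E11 = -(b*(c^2 + 2 - 4*c)) / (b^2*c^2 + 2*b^2 - 3*b^2*c + c - b*c^2 + 2*b))
    (hE10 : E10 = -(b^2*c^2 + 2*b^2 - 3*b^2*c - c) / (b^2*c^2 + 2*b^2 - 3*b^2*c + c - b*c^2 + 2*b))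
    (hE01 : E01 = -(b*(c^2 + 2 - 2*c)) / (b^2*c^2 + 2*b^2 - 3*b^2*c + c - b*c^2 + 2*b)) :
    (2*E11)^2 + (E01^2 + 1 - E10^2)^2 - 8*E01^2 = 0 := by
  -- With the denominator abstracted to an atom `Q`, clearing it leaves a polynomial identity
  -- that holds once `Q` is expanded again.
  generalize hq : b^2*c^2 + 2*b^2 - 3*b^2*c + c - b*c^2 + 2*b = Q at *
  subst hE11 hE10 hE01
  field_simp
  rw [← hq]
  ring
end
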